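/- For y ≥ 2, let n(y) be the largest integer n such that 𝒫_n ≤ y, where 𝒫_n is the n-th primorial. Then p_{n(y)} ∼ log y as y → ∞; i.e., the largest prime factor of the largest primorial not exceeding y is asymptotic to log y. -/

import Mathlib

open Filter Real

/-- The `n`-th prime, 1-indexed: `nthPrime 1 = 2`, `nthPrime 2 = 3`, ... -/
noncomputable def nthPrime (n : ℕ) : ℕ := Nat.nth Nat.Prime (n - 1)

/-- `N x d` is the number of indices `n ≥ 2` with `pₙ ≤ x` and `pₙ - pₙ₋₁ = d`. -/
noncomputable def N (x : ℝ) (d : ℕ) : ℕ :=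
  Set.ncard {n : ℕ | 2 ≤ n ∧ (nthPrime n : ℝ) ≤ x ∧ nthPrime n - nthPrime (n - 1) = d}

/-- `N* x`, the maximal number of occurrences of any gap among consecutive primes up to `x`. -/
noncomputable def Nstar (x : ℝ) : ℕ := sSup (Set.range fun d => N x d)

/-- A positive integer `d` is a jumping champion for `x` if `N x d` attains `max_d N x d`. -/
def JumpingChampion (x : ℝ) (d : ℕ) : Prop := 0 < d ∧ ∀ e : ℕ, N x e ≤ N x d

/-- `pi2 x d` counts primes `q ≤ x` such that `q - d` is also prime. -/
noncomputable def pi2 (x : ℝ) (d : ℕ) : ℕ :=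
  Set.ncard {q : ℕ | q.Prime ∧ (q : ℝ) ≤ x ∧ (q - d).Prime}

/-- `pi3 x d d'` counts primes `q ≤ x` such that `q - d` and `q - d'` are both prime. -/
noncomputable def pi3 (x : ℝ) (d d' : ℕ) : ℕ :=
  Set.ncard {q : ℕ | q.Prime ∧ (q : ℝ) ≤ x ∧ (q - d).Prime ∧ (q - d').Prime}

/-- The twin prime constant `C₂ = ∏_{p > 2} (1 - 1/(p-1)²)`. -/
noncomputable def C2 : ℝ := ∏' q : {q : ℕ // q.Prime ∧ 2 < q}, (1 - 1 / ((q : ℕ) - 1 : ℝ) ^ 2)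

/-- The singular series `𝔖(d)`. -/
noncomputable def singularSeries (d : ℕ) : ℝ :=
  if Even d then
    2 * C2 * ∏ q ∈ d.primeFactors.filter (fun q => 2 < q), ((q : ℝ) - 1) / ((q : ℝ) - 2)
  else 0

/-- `nu d' d q` is the number of distinct residue classes mod `q` occupied by `{0, d', d}`. -/
def nu (d' d : ℕ) (q : ℕ) : ℕ :=
  ({(0 : ZMod q), (d' : ZMod q), (d : ZMod q)} : Finset (ZMod q)).card

/-- The singular series of the triple `{0, d', d}`. -/
noncomputable def tripleSingularSeries (d' d : ℕ) : ℝ :=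
  ∏' q : Nat.Primes, ((1 - 1 / ((q : ℕ) : ℝ)) ^ 3)⁻¹ * (1 - (nu d' d q : ℝ) / ((q : ℕ) : ℝ))

/-- The `k`-th primorial, the product of the first `k` primes. -/
noncomputable def primorialN (k : ℕ) : ℕ := ∏ i ∈ Finset.range k, Nat.nth Nat.Prime i

/-- The index `n` of the largest primorial `𝒫ₙ ≤ y`. -/
noncomputable def primorialFloorIndex (y : ℝ) : ℕ := sSup {n : ℕ | (primorialN n : ℝ) ≤ y}

/-- Chebyshev's theta function `ϑ(t) = ∑_{p ≤ t} log p`. -/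
noncomputable def theta (t : ℝ) : ℝ :=
  ∑ q ∈ (Finset.range (⌊t⌋₊ + 1)).filter Nat.Prime, Real.log q

/-!
The prime number theorem is obtained from Ingham's Tauberian theorem. For nonnegative `a` with
summatory function `S`, the Laplace transform of `f u = e⁻ᵘ S(eᵘ) - A` is a simple transform of the
Dirichlet series of `a`, so it extends continuously to the closed half-plane `Re z ≥ 0` once the
Dirichlet series does after its pole at `1` is removed. Pair this boundary function with a
probability density `K` that is the Fourier transform of a compactly supported function: by the
Riemann-Lebesgue lemma the averages `∫ f(v + r w) K(w) dw` tend to `0` at every scale `r`. Since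
`eᵘ (f u + A) = S(eᵘ)` is increasing, `f` cannot drop quickly, so averages at a small scale `r`
control its values and `f → 0`. For the von Mangoldt function the continuation comes from the
nonvanishing of `ζ` on `Re s = 1`, and the conclusion is `ψ(x) ∼ x`, hence `θ(x) ∼ x`.

If `n` is the index of the largest primorial not exceeding `y`, then `θ(p_n) = log 𝒫_n` and
Bertrand's postulate bounds the next prime by `2 p_n`, so that
`θ(p_n) ≤ log y ≤ θ(p_n) + log (2 p_n)`, and `θ(p_n) ∼ p_n`.
-/

open MeasureTheory Set Topology FourierTransform ComplexConjugate Convolution ContDiff SchwartzMap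

/-- Schmidt's notion of a slowly decreasing function, `liminf (f v - f u) ≥ 0` as `u → ∞` and
`0 ≤ v - u → 0`, which is the Tauberian condition in Ingham's theorem. -/
def SlowlyDecreasing (f : ℝ → ℝ) : Prop :=
  ∀ ε > 0, ∃ δ > 0, ∀ᶠ u in atTop, ∀ v ∈ Icc u (u + δ), f u - ε ≤ f v

namespace SlowlyDecreasing

variable {f g : ℝ → ℝ}

lemma congr (hf : SlowlyDecreasing f) (h : f =ᶠ[atTop] g) : SlowlyDecreasing g := by
  intro ε hε
  obtain ⟨δ, hδ, hfδ⟩ := hf ε hε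
  obtain ⟨u₀, hu₀⟩ := eventually_atTop.1 h
  refine ⟨δ, hδ, ?_⟩
  filter_upwards [hfδ, eventually_ge_atTop u₀] with u hu huu₀ v hv
  rw [← hu₀ u huu₀, ← hu₀ v (huu₀.trans hv.1)]
  exact hu v hv

lemma sub_const (hf : SlowlyDecreasing f) (c : ℝ) : SlowlyDecreasing fun u => f u - c := by
  intro ε hε
  obtain ⟨δ, hδ, hfδ⟩ := hf ε hε
  refine ⟨δ, hδ, hfδ.mono fun u hu v hv => ?_⟩
  linarith [hu v hv]

lemma of_monotone_exp_mul {C : ℝ} (hfC : ∀ u, f u ≤ C) (hf : Monotone fun u => exp u * f u) :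
    SlowlyDecreasing f := by
  intro ε hε
  have hC : 0 < max C 1 := by positivity
  refine ⟨ε / max C 1, by positivity, Eventually.of_forall fun u v hv => ?_⟩
  have hexp : exp (u - v) * f u ≤ f v := by
    have := mul_le_mul_of_nonneg_left (hf hv.1) (exp_pos (-v)).le
    simpa only [← mul_assoc, ← exp_add, neg_add_cancel, exp_zero, one_mul, neg_add_eq_sub]
      using this
  have hloss : (1 - exp (u - v)) * f u ≤ (v - u) * max C 1 :=
    calc (1 - exp (u - v)) * f u ≤ (1 - exp (u - v)) * max C 1 :=
          mul_le_mul_of_nonneg_left ((hfC u).trans (le_max_left _ _))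
            (sub_nonneg.2 (exp_le_one_iff.2 (sub_nonpos.2 hv.1)))
      _ ≤ (v - u) * max C 1 :=
          mul_le_mul_of_nonneg_right (by linarith [add_one_le_exp (u - v)]) hC.le
  have hshort : (v - u) * max C 1 ≤ ε :=
    (le_div_iff₀ hC).1 (by linarith [hv.2])
  linarith

end SlowlyDecreasing

lemma sub_le_integral_mul_of_le_on {α : Type*} [MeasurableSpace α] {μ : Measure α}
    {g K : α → ℝ} {C m : ℝ} {s : Set α} (hs : MeasurableSet s)
    (hg : AEStronglyMeasurable g μ) (hgC : ∀ x, |g x| ≤ C)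
    (hK : Integrable K μ) (hK_nonneg : ∀ x, 0 ≤ K x) (hK_one : ∫ x, K x ∂μ = 1)
    (hmC : m ≤ C) (hmg : ∀ x ∈ s, m ≤ g x) :
    m - 2 * C * ∫ x in sᶜ, K x ∂μ ≤ ∫ x, g x * K x ∂μ := by
  have hgK : Integrable (fun x => g x * K x) μ := hK.bdd_mul hg (Eventually.of_forall hgC)
  have hpointwise : ∀ x, m * K x - sᶜ.indicator (fun x => 2 * C * K x) x ≤ g x * K x := by
    intro x
    by_cases hx : x ∈ s
    · simpa [hx] using mul_le_mul_of_nonneg_right (hmg x hx) (hK_nonneg x)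
    · have := mul_le_mul_of_nonneg_right
        (show m - 2 * C ≤ g x by linarith [neg_le_of_abs_le (hgC x)]) (hK_nonneg x)
      simpa [hx, sub_mul] using this
  have htail := (hK.const_mul (2 * C)).indicator hs.compl
  calc m - 2 * C * ∫ x in sᶜ, K x ∂μ
      = ∫ x, m * K x - sᶜ.indicator (fun x => 2 * C * K x) x ∂μ := by
        rw [integral_sub (hK.const_mul m) htail, integral_const_mul, hK_one, mul_one,
          integral_indicator hs.compl, integral_const_mul]
    _ ≤ ∫ x, g x * K x ∂μ := integral_mono ((hK.const_mul m).sub htail) hgK hpointwise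

section ApproximateIdentity

variable {f K : ℝ → ℝ} {C : ℝ}

lemma exists_setIntegral_compl_Icc_le (hK : Integrable K) {ε : ℝ} (hε : 0 < ε) :
    ∃ R > 0, ∫ w in (Icc (-R) R)ᶜ, K w ≤ ε := by
  have htail : Tendsto (fun R : ℝ => ∫ w in (Icc (-R) R)ᶜ, K w) atTop (𝓝 0) := by
    have hcover : Tendsto (fun R : ℝ => ∫ w in Icc (-R) R, K w) atTop (𝓝 (∫ w, K w)) :=
      (aecover_Icc tendsto_neg_atTop_atBot tendsto_id).integral_tendsto_of_countably_generated hK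
    simpa [setIntegral_compl measurableSet_Icc hK] using hcover.const_sub (∫ w, K w)
  obtain ⟨R, hR, hR₀⟩ := ((htail.eventually_le_const hε).and (eventually_gt_atTop 0)).exists
  exact ⟨R, hR₀, hR⟩

/- The shift `c` lets one statement serve both bounds: the window `closedBall (v + c) δ` lies to the
right of `v` for the upper bound on `f`, and to the left of `v` for the lower bound, where the lemma
is applied to `-f`. -/
lemma eventually_lt_of_tendsto_integral_mul_zero (hf : Measurable f) (hfC : ∀ u, |f u| ≤ C)
    (hK : Integrable K) (hK_nonneg : ∀ w, 0 ≤ K w) (hK_one : ∫ w, K w = 1)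
    (hmean : ∀ r > 0, Tendsto (fun v => ∫ w, f (v + r * w) * K w) atTop (𝓝 0))
    {ε δ c : ℝ} (hε : 0 < ε) (hδ : 0 < δ)
    (hloc : ∀ᶠ v in atTop, ∀ w ∈ Metric.closedBall (v + c) δ, f v - ε ≤ f w) :
    ∀ᶠ v in atTop, f v < 3 * ε := by
  have hC : 0 ≤ C := (abs_nonneg _).trans (hfC 0)
  obtain ⟨R, hR, htail⟩ :=
    exists_setIntegral_compl_Icc_le hK (show 0 < ε / (2 * C + 1) by positivity)
  have hCtail : 2 * C * ∫ w in (Icc (-R) R)ᶜ, K w ≤ ε := by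
    calc 2 * C * ∫ w in (Icc (-R) R)ᶜ, K w ≤ 2 * C * (ε / (2 * C + 1)) := by gcongr
      _ ≤ ε := by rw [mul_div_left_comm]; exact mul_le_of_le_one_right hε.le (by
          rw [div_le_one (by positivity)]; linarith)
  have hmean_c := (hmean (δ / R) (by positivity)).comp
    (tendsto_atTop_add_const_right _ c tendsto_id)
  filter_upwards [hloc, hmean_c.eventually_lt_const hε] with v hv hvε
  have hle : ∀ w ∈ Icc (-R) R, f v - ε ≤ f (v + c + δ / R * w) := by
    intro w hw
    refine hv _ ?_
    rw [Metric.mem_closedBall, dist_self_add_left, Real.norm_eq_abs, abs_mul,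
      abs_of_pos (by positivity), div_mul_eq_mul_div, div_le_iff₀ hR]
    exact mul_le_mul_of_nonneg_left (abs_le.2 hw) hδ.le
  have := sub_le_integral_mul_of_le_on measurableSet_Icc
    (hf.comp (by fun_prop : Measurable fun w => v + c + δ / R * w)).aestronglyMeasurable
    (fun w => hfC _) hK hK_nonneg hK_one
    (by linarith [le_of_abs_le (hfC v)]) hle
  simp only [Function.comp_apply, id] at hvε this
  linarith

theorem SlowlyDecreasing.tendsto_zero_of_tendsto_integral_mul_zero (hsd : SlowlyDecreasing f)
    (hf : Measurable f) (hfC : ∀ u, |f u| ≤ C)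
    (hK : Integrable K) (hK_nonneg : ∀ w, 0 ≤ K w) (hK_one : ∫ w, K w = 1)
    (hmean : ∀ r > 0, Tendsto (fun v => ∫ w, f (v + r * w) * K w) atTop (𝓝 0)) :
    Tendsto f atTop (𝓝 0) := by
  rw [Metric.tendsto_nhds]
  intro η hη
  obtain ⟨δ, hδ, hsdδ⟩ := hsd (η / 3) (by positivity)
  have hupper : ∀ᶠ v in atTop, f v < 3 * (η / 3) := by
    refine eventually_lt_of_tendsto_integral_mul_zero hf hfC hK hK_nonneg hK_one hmean
      (δ := δ / 2) (c := δ / 2) (by positivity) (by positivity) ?_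
    filter_upwards [hsdδ] with v hv w hw
    rw [closedBall_eq_Icc] at hw
    exact hv w ⟨by linarith [hw.1], by linarith [hw.2]⟩
  have hlower : ∀ᶠ v in atTop, -f v < 3 * (η / 3) := by
    refine eventually_lt_of_tendsto_integral_mul_zero (f := fun v => -f v) hf.neg
      (by simpa only [abs_neg] using hfC) hK hK_nonneg hK_one
      (fun r hr => by simpa only [neg_mul, integral_neg, neg_zero] using (hmean r hr).neg)
      (δ := δ / 2) (c := -(δ / 2)) (by positivity) (by positivity) ?_
    obtain ⟨u₀, hu₀⟩ := eventually_atTop.1 hsdδ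
    filter_upwards [eventually_ge_atTop (u₀ + δ)] with v hv w hw
    rw [closedBall_eq_Icc] at hw
    linarith [hu₀ w (by linarith [hw.1]) v ⟨by linarith [hw.2], by linarith [hw.1]⟩]
  filter_upwards [hupper, hlower] with v hv₁ hv₂
  rw [Real.dist_eq, sub_zero, abs_lt]
  constructor <;> linarith

end ApproximateIdentity

section Kernel

lemma conj_fourier_ofReal {b : ℝ → ℝ} (hb : b.Even) (x : ℝ) :
    conj (𝓕 (fun t => (b t : ℂ)) x) = 𝓕 (fun t => (b t : ℂ)) x := by
  simp only [fourier_real_eq_integral_exp_smul, smul_eq_mul, ← integral_conj]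
  rw [← integral_neg_eq_self]
  refine integral_congr_ae (Eventually.of_forall fun t => ?_)
  simp [hb t, ← Complex.exp_conj, Complex.conj_ofNat]

lemma fourier_convolution_self_ofReal {b : ℝ → ℝ} (hb : b.Even)
    (hbi : Integrable fun t => (b t : ℂ)) (x : ℝ) :
    𝓕 ((fun t => (b t : ℂ)) ⋆[ContinuousLinearMap.mul ℂ ℂ] (fun t => (b t : ℂ))) x =
      (‖𝓕 (fun t => (b t : ℂ)) x‖ ^ 2 : ℝ) := by
  rw [Real.fourier_mul_convolution_eq hbi hbi, Complex.ofReal_pow, ← Complex.mul_conj',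
    conj_fourier_ofReal hb]

/- The Fourier transform of an even real bump is real, so convolving the bump with itself squares it
into something nonnegative. -/
lemma exists_continuous_hasCompactSupport_fourier_eq_nonneg :
    ∃ (g : ℝ → ℂ) (K : ℝ → ℝ), Continuous g ∧ HasCompactSupport g ∧ (∀ x, 𝓕 g x = K x) ∧
      Continuous K ∧ Integrable K ∧ (∀ x, 0 ≤ K x) ∧ K 0 = 1 := by
  let φ : ContDiffBump (0 : ℝ) := default
  set b : ℝ → ℝ := φ.normed volume with hb_def
  set B : ℝ → ℂ := fun t => b t with hB_def
  have hb_even : b.Even := φ.normed_neg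
  have hB_supp : HasCompactSupport B :=
    φ.hasCompactSupport_normed.comp_left (g := ((↑) : ℝ → ℂ)) Complex.ofReal_zero
  have hB_smooth : ContDiff ℝ ∞ B := Complex.ofRealCLM.contDiff.comp φ.contDiff_normed
  have hB_int : Integrable B := hB_smooth.continuous.integrable_of_hasCompactSupport hB_supp
  let S : 𝓢(ℝ, ℂ) := 𝓕 (hB_supp.toSchwartzMap hB_smooth)
  have hS : ⇑S = 𝓕 B := rfl
  refine ⟨B ⋆[ContinuousLinearMap.mul ℂ ℂ] B, fun x => ‖𝓕 B x‖ ^ 2,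
    hB_supp.continuous_convolution_right _ hB_int.locallyIntegrable hB_smooth.continuous,
    hB_supp.convolution _ hB_supp, fourier_convolution_self_ofReal hb_even hB_int,
    ?_, ?_, fun x => by positivity, ?_⟩
  · rw [← hS]
    exact S.continuous.norm.pow 2
  · rw [← hS]
    exact (S.memLp 2).integrable_norm_pow two_ne_zero
  · have hmass : 𝓕 B 0 = 1 := by
      simp only [fourier_real_eq_integral_exp_smul, hB_def]
      simp [integral_complex_ofReal, hb_def, φ.integral_normed]
    simp [hmass]

theorem exists_continuous_hasCompactSupport_fourier_eq_density :
    ∃ (g : ℝ → ℂ) (K : ℝ → ℝ), Continuous g ∧ HasCompactSupport g ∧ (∀ x, 𝓕 g x = K x) ∧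
      Integrable K ∧ (∀ x, 0 ≤ K x) ∧ ∫ x, K x = 1 := by
  obtain ⟨g, K, hg, hg_supp, hgK, hK_cont, hK, hK_nonneg, hK_zero⟩ :=
    exists_continuous_hasCompactSupport_fourier_eq_nonneg
  have hc : 0 < ∫ x, K x :=
    integral_pos_of_integrable_nonneg_nonzero (x := 0) hK_cont hK hK_nonneg (by simp [hK_zero])
  refine ⟨(((∫ x, K x)⁻¹ : ℝ) : ℂ) • g, fun x => (∫ x, K x)⁻¹ * K x, hg.const_smul _,
    hg_supp.smul_left, fun x => ?_, hK.const_mul _,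
    fun x => mul_nonneg (inv_nonneg.2 hc.le) (hK_nonneg x), ?_⟩
  · rw [Complex.ofReal_mul, ← hgK]
    exact congrFun (VectorFourier.fourierIntegral_const_smul 𝐞 volume (innerₗ ℝ) g _) x
  · rw [integral_const_mul, inv_mul_cancel₀ hc.ne']

end Kernel

/-- The one-sided Laplace transform `∫₀^∞ h(u) e^{-zu} du`; it takes the junk value `0` where the
integral does not converge absolutely. -/
noncomputable def laplaceTransform (h : ℝ → ℂ) (z : ℂ) : ℂ :=
  ∫ u in Ioi (0 : ℝ), h u * Complex.exp (-z * u)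

section Laplace

variable {h : ℝ → ℂ} {C : ℝ}

lemma laplaceTransform_comp_mul_left {r : ℝ} (hr : 0 < r) (z : ℂ) :
    laplaceTransform (fun u => h (r * u)) z = (r⁻¹ : ℝ) * laplaceTransform h (z / r) := by
  have hscale := integral_comp_mul_left_Ioi (fun u : ℝ => h u * Complex.exp (-(z / r) * u)) 0 hr
  rw [mul_zero, Complex.real_smul] at hscale
  rw [laplaceTransform, laplaceTransform, ← hscale]
  refine integral_congr_ae (Eventually.of_forall fun u => ?_)
  have hexponent : -(z / r) * ((r * u : ℝ) : ℂ) = -z * u := by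
    have : (r : ℂ) ≠ 0 := mod_cast hr.ne'
    push_cast
    field_simp
  simp only [hexponent]

lemma integrableOn_mul_exp_neg (hh : Measurable h) (hhC : ∀ u, ‖h u‖ ≤ C) {z : ℂ}
    (hz : 0 < z.re) : IntegrableOn (fun u : ℝ => h u * Complex.exp (-z * u)) (Ioi 0) :=
  (integrableOn_exp_mul_complex_Ioi (by simpa using hz) 0).bdd_mul hh.aestronglyMeasurable
    (Eventually.of_forall hhC)

lemma laplaceTransform_sub_const (hh : Measurable h) (hhC : ∀ u, ‖h u‖ ≤ C) (c : ℂ) {z : ℂ}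
    (hz : 0 < z.re) :
    laplaceTransform (fun u => h u - c) z = laplaceTransform h z - c / z := by
  have hexp := integrableOn_exp_mul_complex_Ioi (show (-z).re < 0 by simpa using hz) 0
  simp only [laplaceTransform, sub_mul]
  rw [integral_sub (integrableOn_mul_exp_neg hh hhC hz) (hexp.const_mul c), integral_const_mul,
    integral_exp_mul_complex_Ioi (by simpa using hz)]
  simp [div_eq_mul_inv]

lemma fourier_indicator_mul_exp_neg (σ ξ : ℝ) :
    𝓕 ((Ioi (0 : ℝ)).indicator fun u => h u * Complex.exp (-σ * u)) ξ =
      laplaceTransform h (σ + 2 * π * ξ * Complex.I) := by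
  rw [laplaceTransform, fourier_real_eq_integral_exp_smul, ← integral_indicator measurableSet_Ioi]
  refine integral_congr_ae (Eventually.of_forall fun u => ?_)
  by_cases hu : u ∈ Ioi (0 : ℝ)
  · simp only [indicator_of_mem hu, smul_eq_mul]
    rw [mul_left_comm, ← Complex.exp_add]
    congr 2
    push_cast
    ring
  · simp only [indicator_of_notMem hu, smul_zero]

lemma fourier_exp_mul (g : ℝ → ℂ) (v u : ℝ) :
    𝓕 (fun ξ : ℝ => Complex.exp (2 * π * v * ξ * Complex.I) * g ξ) u = 𝓕 g (u - v) := by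
  simp only [fourier_real_eq_integral_exp_smul, smul_eq_mul, ← mul_assoc, ← Complex.exp_add]
  congr! 4 with ξ
  push_cast
  ring

lemma integrable_exp_mul {g : ℝ → ℂ} (hg : Integrable g) (v : ℝ) :
    Integrable fun ξ : ℝ => Complex.exp (2 * π * v * ξ * Complex.I) * g ξ := by
  refine hg.bdd_mul (c := 1) (by fun_prop) (Eventually.of_forall fun ξ => ?_)
  rw [← Complex.norm_exp_ofReal_mul_I (2 * π * v * ξ)]
  push_cast
  rfl

lemma fourier_laplaceTransform_mul {σ : ℝ} (hσ : 0 < σ) (hh : Measurable h)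
    (hhC : ∀ u, ‖h u‖ ≤ C) {g : ℝ → ℂ} (hg : Integrable g) (v : ℝ) :
    𝓕 (fun ξ : ℝ => laplaceTransform h (σ + 2 * π * ξ * Complex.I) * g ξ) (-v) =
      ∫ u in Ioi (0 : ℝ), h u * Complex.exp (-σ * u) * 𝓕 g (u - v) := by
  have hf : Integrable ((Ioi (0 : ℝ)).indicator fun u => h u * Complex.exp (-σ * u)) :=
    (integrable_indicator_iff measurableSet_Ioi).2
      (integrableOn_mul_exp_neg hh hhC (by simpa using hσ))
  have hself_adjoint := VectorFourier.integral_bilin_fourierIntegral_eq_flip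
    (ContinuousLinearMap.mul ℂ ℂ) (L := innerₗ ℝ) Real.continuous_fourierChar continuous_inner hf
    (integrable_exp_mul hg v)
  calc 𝓕 (fun ξ : ℝ => laplaceTransform h (σ + 2 * π * ξ * Complex.I) * g ξ) (-v)
      = ∫ ξ, 𝓕 ((Ioi (0 : ℝ)).indicator fun u => h u * Complex.exp (-σ * u)) ξ *
          (Complex.exp (2 * π * v * ξ * Complex.I) * g ξ) := by
        rw [fourier_real_eq_integral_exp_smul]
        simp only [fourier_indicator_mul_exp_neg, smul_eq_mul]
        congr! 2 with ξ
        rw [mul_left_comm]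
        congr! 3
        push_cast
        ring
    _ = ∫ u, (Ioi (0 : ℝ)).indicator (fun u => h u * Complex.exp (-σ * u)) u *
          𝓕 (fun ξ : ℝ => Complex.exp (2 * π * v * ξ * Complex.I) * g ξ) u := by
        simpa using! hself_adjoint
    _ = ∫ u in Ioi (0 : ℝ), h u * Complex.exp (-σ * u) * 𝓕 g (u - v) := by
        rw [← integral_indicator measurableSet_Ioi]
        simp only [fourier_exp_mul, indicator_mul_left]

lemma continuousOn_fourier_boundary {H : ℂ → ℂ} (hH : ContinuousOn H {z | 0 ≤ z.re})
    {g : ℝ → ℂ} (hg : Continuous g) (hg_supp : HasCompactSupport g) (v : ℝ) :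
    ContinuousOn (fun σ : ℝ => 𝓕 (fun ξ : ℝ => H (σ + 2 * π * ξ * Complex.I) * g ξ) v)
      (Ici 0) := by
  simp only [fourier_real_eq_integral_exp_smul]
  refine continuousOn_integral_of_compact_support hg_supp ?_ fun σ ξ _ hξ => ?_
  · have hH_comp : ContinuousOn (fun p : ℝ × ℝ => H (p.1 + 2 * π * p.2 * Complex.I))
        (Ici 0 ×ˢ univ) :=
      hH.comp (by fun_prop) fun p hp => by simpa using hp.1
    exact (show Continuous fun p : ℝ × ℝ => Complex.exp (↑(-2 * π * p.2 * v) * Complex.I)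
      by fun_prop).continuousOn.smul (hH_comp.mul (by fun_prop))
  · simp [image_eq_zero_of_notMem_tsupport hξ]

lemma continuousOn_integral_mul_exp_neg (hh : Measurable h) (hhC : ∀ u, ‖h u‖ ≤ C)
    {k : ℝ → ℂ} (hk : Integrable k) :
    ContinuousOn (fun σ : ℝ => ∫ u in Ioi (0 : ℝ), h u * Complex.exp (-σ * u) * k u)
      (Ici 0) := by
  intro σ₀ _
  refine continuousWithinAt_of_dominated (bound := fun u => C * ‖k u‖)
    (Eventually.of_forall fun σ => ?_) ?_ (hk.norm.const_mul C).integrableOn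
    (Eventually.of_forall fun u => by fun_prop)
  · exact (hh.mul (by fun_prop)).aestronglyMeasurable.mul hk.integrableOn.aestronglyMeasurable
  · filter_upwards [self_mem_nhdsWithin] with σ hσ
    filter_upwards [ae_restrict_mem measurableSet_Ioi] with u hu
    have hdecay : ‖Complex.exp (-σ * u)‖ ≤ 1 := by
      rw [Complex.norm_exp, exp_le_one_iff]
      simpa using mul_nonneg hσ (le_of_lt hu)
    rw [norm_mul, norm_mul]
    gcongr
    exact (mul_le_of_le_one_right (norm_nonneg _) hdecay).trans (hhC u)

lemma tendsto_integral_mul_fourier_sub (hh : Measurable h) (hhC : ∀ u, ‖h u‖ ≤ C)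
    {H : ℂ → ℂ} (hH : ContinuousOn H {z | 0 ≤ z.re})
    (hhH : EqOn (laplaceTransform h) H {z | 0 < z.re})
    {g : ℝ → ℂ} (hg : Continuous g) (hg_supp : HasCompactSupport g)
    (hg_fourier : Integrable (𝓕 g)) :
    Tendsto (fun v : ℝ => ∫ u in Ioi (0 : ℝ), h u * 𝓕 g (u - v)) atTop (𝓝 0) := by
  have hboundary (v : ℝ) : 𝓕 (fun ξ : ℝ => H (2 * π * ξ * Complex.I) * g ξ) (-v) =
      ∫ u in Ioi (0 : ℝ), h u * 𝓕 g (u - v) := by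
    have hinterior : EqOn
        (fun σ : ℝ => 𝓕 (fun ξ : ℝ => H (σ + 2 * π * ξ * Complex.I) * g ξ) (-v))
        (fun σ : ℝ => ∫ u in Ioi (0 : ℝ), h u * Complex.exp (-σ * u) * 𝓕 g (u - v)) (Ioi 0) := by
      intro σ hσ
      have hσ' (ξ : ℝ) : H (σ + 2 * π * ξ * Complex.I) =
          laplaceTransform h (σ + 2 * π * ξ * Complex.I) := (hhH (by simpa using hσ)).symm
      simp only [hσ', ← fourier_laplaceTransform_mul hσ hh hhC
        (hg.integrable_of_hasCompactSupport hg_supp)]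
    have := hinterior.of_subset_closure (continuousOn_fourier_boundary hH hg hg_supp (-v))
      (continuousOn_integral_mul_exp_neg hh hhC (hg_fourier.comp_sub_right v))
      Ioi_subset_Ici_self (closure_Ioi (0 : ℝ)).ge self_mem_Ici
    simpa using this
  simp only [← hboundary]
  exact (Real.zero_at_infty_fourier _).comp
    (tendsto_neg_atTop_atBot.mono_right atBot_le_cocompact)

end Laplace

section Ingham

variable {f : ℝ → ℝ} {C : ℝ}

lemma integral_indicator_Ioi_comp_add_mul (f K : ℝ → ℝ) {r : ℝ} (hr : 0 < r) (v : ℝ) :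
    ∫ w, (Ioi 0).indicator f (v + r * w) * K w =
      ∫ u in Ioi (0 : ℝ), f (r * u) * K (u - v / r) := by
  rw [← integral_indicator measurableSet_Ioi, ← integral_sub_right_eq_self _ (v / r)]
  refine integral_congr_ae (Eventually.of_forall fun u => ?_)
  have hcancel : v + r * (u - v / r) = r * u := by
    field_simp
    ring
  by_cases hu : 0 < u <;> simp [indicator, hcancel, hr, hu]

lemma tendsto_integral_indicator_comp_add_mul (hf : Measurable f) (hfC : ∀ u, |f u| ≤ C)
    {H : ℂ → ℂ} (hH : ContinuousOn H {z | 0 ≤ z.re})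
    (hfH : EqOn (laplaceTransform fun u => (f u : ℂ)) H {z | 0 < z.re})
    {g : ℝ → ℂ} {K : ℝ → ℝ} (hg : Continuous g) (hg_supp : HasCompactSupport g)
    (hgK : ∀ x, 𝓕 g x = K x) (hK : Integrable K) {r : ℝ} (hr : 0 < r) :
    Tendsto (fun v => ∫ w, (Ioi 0).indicator f (v + r * w) * K w) atTop (𝓝 0) := by
  have hsmooth := tendsto_integral_mul_fourier_sub (C := C) (h := fun u => (f (r * u) : ℂ))
    (H := fun z => (r⁻¹ : ℝ) * H (z / r)) (by fun_prop)
    (fun u => (Complex.norm_real _).trans_le (hfC (r * u)))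
    (continuousOn_const.mul (hH.comp (by fun_prop) fun z hz => ?_))
    (fun z hz => ?_) hg hg_supp (hK.ofReal.congr (Eventually.of_forall fun x => (hgK x).symm))
  · have hreal := Complex.continuous_re.continuousAt.tendsto.comp
      (hsmooth.comp (tendsto_id.atTop_div_const hr))
    refine hreal.congr fun v => ?_
    simp only [Function.comp_apply, hgK, ← Complex.ofReal_mul, integral_complex_ofReal,
      Complex.ofReal_re, integral_indicator_Ioi_comp_add_mul f K hr, id]
  · rw [mem_ofPred_eq, Complex.div_ofReal_re]
    exact div_nonneg hz hr.le
  · rw [laplaceTransform_comp_mul_left (h := fun u => (f u : ℂ)) hr, hfH]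
    rw [mem_ofPred_eq, Complex.div_ofReal_re]
    exact div_pos hz hr

theorem SlowlyDecreasing.tendsto_zero_of_laplaceTransform (hsd : SlowlyDecreasing f)
    (hf : Measurable f) (hfC : ∀ u, |f u| ≤ C) {H : ℂ → ℂ} (hH : ContinuousOn H {z | 0 ≤ z.re})
    (hfH : EqOn (laplaceTransform fun u => (f u : ℂ)) H {z | 0 < z.re}) :
    Tendsto f atTop (𝓝 0) := by
  obtain ⟨g, K, hg, hg_supp, hgK, hK, hK_nonneg, hK_one⟩ :=
    exists_continuous_hasCompactSupport_fourier_eq_density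
  have hfi : (Ioi 0).indicator f =ᶠ[atTop] f := by
    filter_upwards [eventually_gt_atTop 0] with u hu using indicator_of_mem hu f
  have hfiC (u : ℝ) : |(Ioi 0).indicator f u| ≤ C := (norm_indicator_le_norm_self f u).trans (hfC u)
  exact ((hsd.congr hfi.symm).tendsto_zero_of_tendsto_integral_mul_zero
    (hf.indicator measurableSet_Ioi) hfiC hK hK_nonneg hK_one fun r hr =>
      tendsto_integral_indicator_comp_add_mul hf hfC hH hfH hg hg_supp hgK hK hr).congr' hfi

end Ingham

/-- The summatory function `x ↦ ∑_{1 ≤ k ≤ x} a k` of a sequence; the value `a 0` is ignored, as it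
is by `LSeries`. -/
noncomputable def summatory (a : ℕ → ℝ) (x : ℝ) : ℝ := ∑ k ∈ Finset.Icc 1 ⌊x⌋₊, a k

section WienerIkehara

variable {a : ℕ → ℝ} {C : ℝ}

lemma summatory_nonneg (ha : 0 ≤ a) (x : ℝ) : 0 ≤ summatory a x :=
  Finset.sum_nonneg fun k _ => ha k

lemma monotone_summatory (ha : 0 ≤ a) : Monotone (summatory a) := fun _ _ hxy =>
  Finset.sum_le_sum_of_subset_of_nonneg
    (Finset.Icc_subset_Icc_right (Nat.floor_le_floor hxy)) fun k _ _ => ha k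

lemma LSeries_eq_mul_laplaceTransform (ha : 0 ≤ a) (haC : ∀ x ≥ 0, summatory a x ≤ C * x)
    {s : ℂ} (hs : 1 < s.re) :
    LSeries (fun n => (a n : ℂ)) s =
      s * laplaceTransform (fun u => (exp (-u) * summatory a (exp u) : ℝ)) (s - 1) := by
  have hbigO : (fun n : ℕ => ∑ k ∈ Finset.Icc 1 n, a k) =O[atTop] fun n => (n : ℝ) ^ (1 : ℝ) := by
    refine Asymptotics.IsBigO.of_bound C (Eventually.of_forall fun n => ?_)
    have hn := haC n n.cast_nonneg
    rw [summatory, Nat.floor_natCast] at hn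
    rwa [norm_of_nonneg (Finset.sum_nonneg fun k _ => ha k), rpow_one, norm_natCast]
  rw [LSeries_eq_mul_integral_of_nonneg a zero_le_one hs hbigO ha, laplaceTransform]
  congr 1
  have hexp : Ioi (1 : ℝ) = exp '' Ioi 0 := by rw [image_exp_Ioi, exp_zero]
  rw [hexp, integral_image_eq_integral_abs_deriv_smul measurableSet_Ioi
    (fun x _ => (hasDerivAt_exp x).hasDerivWithinAt) exp_injective.injOn]
  refine setIntegral_congr_fun measurableSet_Ioi fun u _ => ?_
  simp only [summatory]
  rw [abs_of_pos (exp_pos _), Complex.real_smul,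
    Complex.cpow_def_of_ne_zero (mod_cast (exp_pos u).ne'), ← Complex.ofReal_log (exp_pos u).le,
    log_exp]
  push_cast
  rw [mul_left_comm, mul_right_comm, ← Complex.exp_add, ← Complex.exp_add, mul_comm]
  congr 2
  ring

lemma exp_neg_mul_summatory_nonneg (ha : 0 ≤ a) (u : ℝ) : 0 ≤ exp (-u) * summatory a (exp u) :=
  mul_nonneg (exp_pos _).le (summatory_nonneg ha _)

lemma exp_neg_mul_summatory_le (haC : ∀ x ≥ 0, summatory a x ≤ C * x) (u : ℝ) :
    exp (-u) * summatory a (exp u) ≤ C :=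
  calc exp (-u) * summatory a (exp u) ≤ exp (-u) * (C * exp u) := by
        gcongr
        exact haC _ (exp_pos u).le
    _ = C := by rw [mul_left_comm, ← exp_add, neg_add_cancel, exp_zero, mul_one]

lemma measurable_exp_neg_mul_summatory (ha : 0 ≤ a) :
    Measurable fun u => exp (-u) * summatory a (exp u) := by
  have := (monotone_summatory ha).measurable
  fun_prop

lemma slowlyDecreasing_exp_neg_mul_summatory (ha : 0 ≤ a)
    (haC : ∀ x ≥ 0, summatory a x ≤ C * x) :
    SlowlyDecreasing fun u => exp (-u) * summatory a (exp u) := by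
  refine .of_monotone_exp_mul (exp_neg_mul_summatory_le haC) ?_
  simp only [← mul_assoc, ← exp_add, add_neg_cancel, exp_zero, one_mul]
  exact (monotone_summatory ha).comp exp_monotone

lemma eqOn_laplaceTransform_exp_neg_mul_summatory_sub (ha : 0 ≤ a)
    (haC : ∀ x ≥ 0, summatory a x ≤ C * x) {A : ℝ} {G : ℂ → ℂ}
    (haG : EqOn (fun s => LSeries (fun n => (a n : ℂ)) s - A / (s - 1)) G {s | 1 < s.re}) :
    EqOn (laplaceTransform fun u => (exp (-u) * summatory a (exp u) - A : ℝ))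
      (fun z => (G (z + 1) - A) / (z + 1)) {z | 0 < z.re} := by
  intro z (hz : 0 < z.re)
  have hz_add : 1 < (z + 1).re := by simpa using hz
  have hz_ne : z ≠ 0 := Complex.ne_zero_of_re_pos hz
  have hz_add_ne : z + 1 ≠ 0 := Complex.ne_zero_of_re_pos (zero_lt_one.trans hz_add)
  have hL := LSeries_eq_mul_laplaceTransform ha haC hz_add
  have hG := haG hz_add
  simp only [add_sub_cancel_right] at hL hG
  simp only [Complex.ofReal_sub]
  rw [laplaceTransform_sub_const (C := C)
    (measurable_exp_neg_mul_summatory ha).complex_ofReal (fun u => ?_) A hz,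
    ← hG, hL]
  · field_simp
    ring
  · rw [Complex.norm_real, norm_of_nonneg (exp_neg_mul_summatory_nonneg ha u)]
    exact exp_neg_mul_summatory_le haC u

theorem tendsto_summatory_div_of_LSeries (ha : 0 ≤ a) (haC : ∀ x ≥ 0, summatory a x ≤ C * x)
    {A : ℝ} {G : ℂ → ℂ} (hG : ContinuousOn G {s | 1 ≤ s.re})
    (haG : EqOn (fun s => LSeries (fun n => (a n : ℂ)) s - A / (s - 1)) G {s | 1 < s.re}) :
    Tendsto (fun x => summatory a x / x) atTop (𝓝 A) := by
  have hbound (u : ℝ) : |exp (-u) * summatory a (exp u) - A| ≤ C + |A| := by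
    refine (abs_sub _ _).trans ?_
    rw [abs_of_nonneg (exp_neg_mul_summatory_nonneg ha u)]
    gcongr
    exact exp_neg_mul_summatory_le haC u
  have hH : ContinuousOn (fun z => (G (z + 1) - A) / (z + 1)) {z : ℂ | 0 ≤ z.re} := by
    have hmem : MapsTo (fun z : ℂ => z + 1) {z | 0 ≤ z.re} {s | 1 ≤ s.re} :=
      fun z hz => by simpa using hz
    refine ((hG.comp (by fun_prop) hmem).sub continuousOn_const).div (by fun_prop) fun z hz => ?_
    exact Complex.ne_zero_of_re_pos (zero_lt_one.trans_le (hmem hz))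
  have hlim := ((slowlyDecreasing_exp_neg_mul_summatory ha haC).sub_const
    A).tendsto_zero_of_laplaceTransform ((measurable_exp_neg_mul_summatory ha).sub_const A) hbound
    hH (eqOn_laplaceTransform_exp_neg_mul_summatory_sub ha haC haG)
  refine ((tendsto_sub_nhds_zero_iff.1 hlim).comp tendsto_log_atTop).congr' ?_
  filter_upwards [eventually_gt_atTop 0] with x hx
  rw [Function.comp_apply, exp_neg, exp_log hx, inv_mul_eq_div]

end WienerIkehara

section PrimeNumberTheorem

open ArithmeticFunction hiding log

theorem tendsto_summatory_residueClass_div {q : ℕ} [NeZero q] {a : ZMod q} (ha : IsUnit a) :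
    Tendsto (fun x => summatory (vonMangoldt.residueClass a) x / x) atTop
      (𝓝 (q.totient : ℝ)⁻¹) := by
  refine tendsto_summatory_div_of_LSeries (C := log 4 + 4) (vonMangoldt.residueClass_nonneg a)
    (fun x hx => ?_) (vonMangoldt.continuousOn_LFunctionResidueClassAux a) fun s hs => ?_
  · exact (Finset.sum_le_sum fun n _ => vonMangoldt.residueClass_le a n).trans
      (Chebyshev.psi_le_const_mul_self hx)
  · rw [vonMangoldt.eqOn_LFunctionResidueClassAux ha hs]
    push_cast
    rfl

theorem tendsto_psi_div : Tendsto (fun x => Chebyshev.psi x / x) atTop (𝓝 1) := by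
  have hΛ : vonMangoldt.residueClass (1 : ZMod 1) = vonMangoldt := by
    ext n
    simp [vonMangoldt.residueClass, Subsingleton.elim _ (1 : ZMod 1)]
  simpa [hΛ] using! tendsto_summatory_residueClass_div (isUnit_one : IsUnit (1 : ZMod 1))

theorem tendsto_theta_div : Tendsto (fun x => Chebyshev.theta x / x) atTop (𝓝 1) := by
  have hsqrt : (fun x => √x) =o[atTop] fun x => x := by
    refine Asymptotics.isLittleO_of_tendsto (fun x hx => by rw [hx, sqrt_zero]) ?_
    simp only [sqrt_div_self]
    exact tendsto_sqrt_atTop.inv_tendsto_atTop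
  have hdiff := (Chebyshev.isBigO_psi_sub_theta_sqrt.trans_isLittleO hsqrt).tendsto_div_nhds_zero
  simpa [sub_div] using tendsto_psi_div.sub hdiff

end PrimeNumberTheorem

section Primorial

theorem nthPrime_prime (n : ℕ) : (nthPrime n).Prime :=
  Nat.prime_nth_prime _

theorem tendsto_nthPrime : Tendsto nthPrime atTop atTop :=
  (Nat.nth_strictMono Nat.infinite_setOfPred_prime).tendsto_atTop.comp (tendsto_sub_atTop_nat 1)

theorem nthPrime_add_one_le_two_mul (n : ℕ) : nthPrime (n + 1) ≤ 2 * nthPrime n := by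
  obtain ⟨q, hq, hlt, hle⟩ := Nat.exists_prime_lt_and_le_two_mul _ (nthPrime_prime n).ne_zero
  refine le_trans ?_ hle
  rw [nthPrime, ← Nat.nth_count hq] at hlt ⊢
  rw [Nat.nth_lt_nth Nat.infinite_setOfPred_prime] at hlt
  rw [Nat.nth_le_nth Nat.infinite_setOfPred_prime]
  omega

theorem primorialN_succ (n : ℕ) : primorialN (n + 1) = primorialN n * nthPrime (n + 1) :=
  Finset.prod_range_succ _ _

theorem primorialN_pos (n : ℕ) : 0 < primorialN n :=
  Finset.prod_pos fun i _ => (Nat.prime_nth_prime i).pos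

theorem le_primorialN (n : ℕ) : n ≤ primorialN n :=
  calc n ≤ 2 ^ n := Nat.lt_two_pow_self.le
    _ = ∏ _i ∈ Finset.range n, 2 := by simp
    _ ≤ primorialN n := Finset.prod_le_prod' fun i _ => (Nat.prime_nth_prime i).two_le

theorem primorial_nthPrime {n : ℕ} (hn : n ≠ 0) : primorial (nthPrime n) = primorialN n := by
  obtain ⟨k, rfl⟩ := Nat.exists_eq_succ_of_ne_zero hn
  have hset : {p ∈ Finset.range (nthPrime (k + 1) + 1) | p.Prime} =
      (Finset.range (k + 1)).image (Nat.nth Nat.Prime) := by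
    ext p
    simp only [Finset.mem_filter, Finset.mem_image, Finset.mem_range, Nat.lt_succ_iff]
    constructor
    · rintro ⟨hle, hp⟩
      rw [nthPrime, ← Nat.nth_count hp, Nat.nth_le_nth Nat.infinite_setOfPred_prime] at hle
      exact ⟨_, hle, Nat.nth_count hp⟩
    · rintro ⟨i, hi, rfl⟩
      exact ⟨Nat.nth_monotone Nat.infinite_setOfPred_prime hi, Nat.prime_nth_prime i⟩
  rw [primorial, hset,
    Finset.prod_image (Nat.nth_injective Nat.infinite_setOfPred_prime).injOn, primorialN]

theorem log_primorialN {n : ℕ} (hn : n ≠ 0) :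
    log (primorialN n) = Chebyshev.theta (nthPrime n) := by
  rw [Chebyshev.theta_eq_log_primorial, Nat.floor_natCast, primorial_nthPrime hn]

end Primorial

section PrimorialFloorIndex

variable {y : ℝ}

theorem bddAbove_primorialN_le : BddAbove {n : ℕ | (primorialN n : ℝ) ≤ y} :=
  ⟨⌊y⌋₊, fun n hn => Nat.le_floor ((Nat.cast_le.2 (le_primorialN n)).trans hn)⟩

theorem le_primorialFloorIndex {n : ℕ} (h : (primorialN n : ℝ) ≤ y) :
    n ≤ primorialFloorIndex y :=
  le_csSup bddAbove_primorialN_le h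

theorem primorialN_primorialFloorIndex_le (hy : 1 ≤ y) :
    (primorialN (primorialFloorIndex y) : ℝ) ≤ y := by
  have hne : {n : ℕ | (primorialN n : ℝ) ≤ y}.Nonempty := ⟨0, by simpa [primorialN] using hy⟩
  exact Nat.sSup_mem hne bddAbove_primorialN_le

theorem lt_primorialN_primorialFloorIndex_add_one (y : ℝ) :
    y < primorialN (primorialFloorIndex y + 1) :=
  lt_of_not_ge fun h => (le_primorialFloorIndex h).not_gt (Nat.lt_succ_self _)

theorem primorialFloorIndex_ne_zero (hy : 2 ≤ y) : primorialFloorIndex y ≠ 0 :=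
  Nat.one_le_iff_ne_zero.1 <| le_primorialFloorIndex <| by
    simpa [primorialN, Nat.nth_prime_zero_eq_two] using hy

theorem tendsto_primorialFloorIndex : Tendsto primorialFloorIndex atTop atTop :=
  tendsto_atTop.2 fun n =>
    (eventually_ge_atTop (primorialN n : ℝ)).mono fun _ => le_primorialFloorIndex

theorem theta_nthPrime_primorialFloorIndex_le_log (hy : 2 ≤ y) :
    Chebyshev.theta (nthPrime (primorialFloorIndex y)) ≤ log y := by
  rw [← log_primorialN (primorialFloorIndex_ne_zero hy)]
  exact log_le_log (Nat.cast_pos.2 (primorialN_pos _))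
    (primorialN_primorialFloorIndex_le (by linarith))

theorem log_le_theta_nthPrime_primorialFloorIndex_add (hy : 2 ≤ y) :
    log y ≤ Chebyshev.theta (nthPrime (primorialFloorIndex y)) +
      log (2 * nthPrime (primorialFloorIndex y)) := by
  set n := primorialFloorIndex y with hn
  have hP : (0 : ℝ) < primorialN n := Nat.cast_pos.2 (primorialN_pos n)
  have hp : (0 : ℝ) < nthPrime n := Nat.cast_pos.2 (nthPrime_prime n).pos
  rw [← log_primorialN (primorialFloorIndex_ne_zero hy), ← hn, ← log_mul hP.ne' (by positivity)]
  refine log_le_log (by linarith) ?_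
  calc y ≤ primorialN (n + 1) := (lt_primorialN_primorialFloorIndex_add_one y).le
    _ = primorialN n * nthPrime (n + 1) := by rw [primorialN_succ, Nat.cast_mul]
    _ ≤ primorialN n * (2 * nthPrime n) := by
      gcongr
      exact_mod_cast nthPrime_add_one_le_two_mul n

theorem tendsto_nthPrime_primorialFloorIndex :
    Tendsto (fun y => (nthPrime (primorialFloorIndex y) : ℝ)) atTop atTop :=
  tendsto_natCast_atTop_atTop.comp (tendsto_nthPrime.comp tendsto_primorialFloorIndex)

end PrimorialFloorIndex

theorem tendsto_log_const_mul_div_atTop {c : ℝ} (hc : 0 < c) :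
    Tendsto (fun x => log (c * x) / x) atTop (𝓝 0) := by
  have h := (isLittleO_log_id_atTop.tendsto_div_nhds_zero.comp
    (tendsto_id.const_mul_atTop hc)).const_mul c
  rw [mul_zero] at h
  refine h.congr fun x => ?_
  simp only [Function.comp_apply, id]
  rw [mul_div_assoc', mul_div_mul_left _ _ hc.ne']

/-- If `n(y)` is the largest index with `𝒫_{n(y)} ≤ y`, then `p_{n(y)} ∼ log y` as `y → ∞`. -/
theorem nthPrime_primorialFloorIndex_asymp :
    Filter.Tendsto (fun y : ℝ => (nthPrime (primorialFloorIndex y) : ℝ) / Real.log y)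
      Filter.atTop (nhds 1) := by
  have hlower := tendsto_theta_div.comp tendsto_nthPrime_primorialFloorIndex
  have hupper := hlower.add
    ((tendsto_log_const_mul_div_atTop two_pos).comp tendsto_nthPrime_primorialFloorIndex)
  rw [add_zero] at hupper
  have hlog : Tendsto (fun y => log y / nthPrime (primorialFloorIndex y)) atTop (𝓝 1) := by
    refine tendsto_of_tendsto_of_tendsto_of_le_of_le' hlower hupper ?_ ?_
    · filter_upwards [eventually_ge_atTop 2] with y hy
      exact div_le_div_of_nonneg_right (theta_nthPrime_primorialFloorIndex_le_log hy)
        (Nat.cast_nonneg _)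
    · filter_upwards [eventually_ge_atTop 2] with y hy
      simp only [Function.comp_apply, ← add_div]
      exact div_le_div_of_nonneg_right (log_le_theta_nthPrime_primorialFloorIndex_add hy)
        (Nat.cast_nonneg _)
  simpa only [inv_div, inv_one] using hlog.inv₀ one_ne_zero
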